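/- Lemma 1, Case 1 (intra-sub-community edge deletion, endpoint merged later): Let m, α, γ, w, a, b be real numbers with 0 < α < m, γ > 0, w ≥ 0, α ≤ a and α ≤ b, and assume the pre-update removal gain is nonpositive, i.e. −w/(2·m) + γ·a·b/(4·m²) ≤ 0. If the post-deletion removal gain is positive, i.e. −(w − 2·α)/(2·(m − α)) + γ·(a − α)·(b − α)/(4·(m − α)²) > 0, then α > (2·m·w − γ·a·b)/(4·m + 2·w). -/

import Mathlib

/-! The removal gain has the sign opposite to that of `2mw - γab`. Deleting the edge changes this
margin by `-α (4m + 2w) + α (4α + γ (a + b - α))`, whose second term is nonnegative. A removal gain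
that is positive after the deletion makes the new margin negative, which forces
`2mw - γab < α (4m + 2w)`. -/

/-- The modularity gain `ΔM(v → ∅, γ)` of moving a vertex out of its sub-community, for total edge
weight `m`, resolution `γ`, weight `w` between `v` and the preceding merges `U`, and weighted
degrees `a = d(v)`, `b = d(U)`. -/
def removalGain {K : Type*} [Field K] (m γ w a b : K) : K :=
  -w / (2 * m) + γ * a * b / (4 * m ^ 2)

/-- The negative of the removal gain scaled by `4m²`: it measures how strongly a vertex is held in
its sub-community, and unlike the gain it is polynomial in the graph data. -/
def retentionMargin {K : Type*} [CommRing K] (m γ w a b : K) : K :=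
  2 * m * w - γ * a * b

lemma removalGain_eq_neg_retentionMargin_div {K : Type*} [Field K] [NeZero (2 : K)]
    {m : K} (hm : m ≠ 0) (γ w a b : K) :
    removalGain m γ w a b = -retentionMargin m γ w a b / (4 * m ^ 2) := by
  have h2 : (2 : K) ≠ 0 := two_ne_zero
  have h4 : (4 : K) = 2 * 2 := by norm_num
  rw [removalGain, retentionMargin, h4]
  field_simp
  ring

lemma retentionMargin_after_deletion {K : Type*} [CommRing K] (m α γ w a b : K) :
    retentionMargin (m - α) γ (w - 2 * α) (a - α) (b - α) =
      retentionMargin m γ w a b - α * (4 * m + 2 * w) + α * (4 * α + γ * (a + b - α)) := by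
  simp only [retentionMargin]
  ring

lemma retentionMargin_sub_le_after_deletion {K : Type*} [CommRing K] [LinearOrder K]
    [IsStrictOrderedRing K] {α γ a b : K} (hα : 0 ≤ α) (hγ : 0 ≤ γ) (hab : α ≤ a + b) (m w : K) :
    retentionMargin m γ w a b - α * (4 * m + 2 * w) ≤
      retentionMargin (m - α) γ (w - 2 * α) (a - α) (b - α) := by
  have hcorrection : 0 ≤ 4 * α + γ * (a + b - α) :=
    add_nonneg (by positivity) (mul_nonneg hγ (sub_nonneg.mpr hab))
  rw [retentionMargin_after_deletion]
  exact le_add_of_nonneg_right (mul_nonneg hα hcorrection)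

section OrderedField

variable {K : Type*} [Field K] [LinearOrder K] [IsStrictOrderedRing K] {m α γ w a b : K}

lemma removalGain_pos_iff (hm : m ≠ 0) :
    0 < removalGain m γ w a b ↔ retentionMargin m γ w a b < 0 := by
  rw [removalGain_eq_neg_retentionMargin_div hm, div_pos_iff_of_pos_right (by positivity), neg_pos]

theorem lemma1_case1_intra_deletion_later_endpoint_general
    (hα : 0 ≤ α) (hαm : α < m) (hγ : 0 ≤ γ) (hmw : 0 < 4 * m + 2 * w) (hab : α ≤ a + b)
    (hpost : 0 < removalGain (m - α) γ (w - 2 * α) (a - α) (b - α)) :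
    (2 * m * w - γ * a * b) / (4 * m + 2 * w) < α := by
  have hmargin : retentionMargin (m - α) γ (w - 2 * α) (a - α) (b - α) < 0 :=
    (removalGain_pos_iff (sub_pos.mpr hαm).ne').mp hpost
  rw [div_lt_iff₀ hmw, ← sub_neg]
  exact (retentionMargin_sub_le_after_deletion hα hγ hab m w).trans_lt hmargin

end OrderedField

theorem lemma1_case1_intra_deletion_later_endpoint
    (m α γ w a b : ℝ)
    (hα0 : 0 < α) (hαm : α < m) (hγ : 0 < γ) (hw : 0 ≤ w)
    (hαa : α ≤ a) (hαb : α ≤ b)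
    (hpre : -w / (2 * m) + γ * a * b / (4 * m ^ 2) ≤ 0)
    (hpost : -(w - 2 * α) / (2 * (m - α)) + γ * (a - α) * (b - α) / (4 * (m - α) ^ 2) > 0) :
    α > (2 * m * w - γ * a * b) / (4 * m + 2 * w) :=
  lemma1_case1_intra_deletion_later_endpoint_general hα0.le hαm hγ.le (by linarith) (by linarith)
    hpost
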